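/- Let A, B, C be nonempty pairwise disjoint sets forming a partition of M ⊆ V. Then the following conjunction holds if and only if X_A ⟂ X_B | X_C: the table 𝔛_M is strictly collapsible over A into 𝔛_{B∪C} with respect to λ_{B'}^M and λ_{B'∪C'}^M for every nonempty B' ⊆ B and nonempty C' ⊆ C, and strictly collapsible over B into 𝔛_{A∪C} with respect to λ_{A'}^M and λ_{A'∪C'}^M for every nonempty A' ⊆ A and nonempty C' ⊆ C. -/

import Mathlib

open Finset

variable {V : Type*} [Fintype V] [DecidableEq V]
variable {𝔛 : V → Type*} [∀ v, Fintype (𝔛 v)] [∀ v, DecidableEq (𝔛 v)]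
  [∀ v, Nonempty (𝔛 v)]

/-- The marginal `p_A` of a distribution `p` on the full table, evaluated at the
`A`-coordinates of `x`. -/
noncomputable def margin (p : (∀ v, 𝔛 v) → ℝ) (A : Finset V) (x : ∀ v, 𝔛 v) : ℝ :=
  ∑ y ∈ Finset.univ.filter (fun y : ∀ v, 𝔛 v => ∀ v ∈ A, y v = x v), p y

/-- `ν_L^M(x_L) = (1/|𝔛_{M∖L}|) Σ_{j ∈ 𝔛_M : j_L = x_L} log p_M(j)`, written with sums over
full configurations (for `L ⊆ M` the extra coordinates cancel against the normalization). -/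
noncomputable def nu (p : (∀ v, 𝔛 v) → ℝ) (L M : Finset V) (x : ∀ v, 𝔛 v) : ℝ :=
  (∏ v ∈ Lᶜ, (Fintype.card (𝔛 v) : ℝ))⁻¹ *
    ∑ j ∈ Finset.univ.filter (fun j : ∀ v, 𝔛 v => ∀ v ∈ L, j v = x v),
      Real.log (margin p M j)

/-- The marginal log-linear parameter `λ_L^M(x_L) = Σ_{L' ⊆ L} (−1)^{|L∖L'|} ν_{L'}^M(x_{L'})`. -/
noncomputable def mll (p : (∀ v, 𝔛 v) → ℝ) (L M : Finset V) (x : ∀ v, 𝔛 v) : ℝ :=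
  ∑ L' ∈ L.powerset, (-1 : ℝ) ^ ((L \ L').card) * nu p L' M x

/-- `X_A ⟂ X_B | X_C`: `p_{A∪B∪C}·p_C = p_{A∪C}·p_{B∪C}` pointwise. -/
def CondIndep (p : (∀ v, 𝔛 v) → ℝ) (A B C : Finset V) : Prop :=
  ∀ x : ∀ v, 𝔛 v,
    margin p (A ∪ B ∪ C) x * margin p C x = margin p (A ∪ C) x * margin p (B ∪ C) x

/-- `𝔛_N` is strictly collapsible over `N ∖ M'` into `𝔛_{M'}` with respect to `λ_L^N`:
`λ_L^{M'} = λ_L^N` and `λ_Z^N = 0` for every `Z ⊆ N` with `L ⊊ Z` meeting `N ∖ M'`. -/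
def StrictlyCollapsible (p : (∀ v, 𝔛 v) → ℝ) (N M' L : Finset V) : Prop :=
  (∀ x : ∀ v, 𝔛 v, mll p L M' x = mll p L N x) ∧
  (∀ Z ⊆ N, L ⊂ Z → (Z ∩ (N \ M')).Nonempty → ∀ x : ∀ v, 𝔛 v, mll p Z N x = 0)

/-!
`λ_L^M` is the `L`-interaction of `log p_M`. Interactions are additive, sum up to the function, and
the `L`-interaction of a function of `x_K` vanishes unless `L ⊆ K`. Under `X_A ⟂ X_B | X_C` we have
`log p_M = log p_{A∪C} + log p_{B∪C} - log p_C`, so for `L` meeting `B` only `log p_{B∪C}`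
contributes to `λ_L^M`; this is strict collapsibility over `A`. Conversely, collapsibility with
respect to the singletons of `B` already makes all interactions that meet both `A` and `B` vanish,
so `p_M` is a product of a function of `x_{A∪C}` and a function of `x_{B∪C}`; averaging this product
over fibers gives the factorization of the margins.
-/

open scoped BigOperators

section MoebiusTransform

variable {ι R : Type*} [DecidableEq ι] [Ring R]

/-- The Möbius transform `s ↦ ∑_{t ⊆ s} (-1)^{|s ∖ t|} g(t)` of a set function `g`: the set function
whose sums over the subsets of `u` recover `g u`. -/
def moebiusTransform (g : Finset ι → R) (s : Finset ι) : R :=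
  ∑ t ∈ s.powerset, (-1) ^ #(s \ t) * g t

theorem moebiusTransform_insert (g : Finset ι → R) {i : ι} {s : Finset ι} (hi : i ∉ s) :
    moebiusTransform g (insert i s) =
      moebiusTransform (fun t ↦ g (insert i t)) s - moebiusTransform g s := by
  have hsign : ∀ t ∈ s.powerset, (-1 : R) ^ #(insert i s \ t) * g t = -((-1) ^ #(s \ t) * g t) := by
    intro t ht
    have hit : i ∉ t := fun h ↦ hi (mem_powerset.1 ht h)
    rw [insert_sdiff_of_notMem _ hit, card_insert_of_notMem (by simp [hi]), pow_succ']
    simp only [neg_mul, one_mul]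
  have hsdiff : ∀ t, insert i s \ insert i t = s \ t := by grind
  simp only [moebiusTransform, sum_powerset_insert hi, sum_congr rfl hsign, hsdiff,
    sum_neg_distrib]
  abel

theorem moebiusTransform_eq_zero {g : Finset ι → R} {i : ι} {s : Finset ι} (hi : i ∈ s)
    (hg : ∀ t, g (insert i t) = g t) : moebiusTransform g s = 0 := by
  rw [← insert_erase hi, moebiusTransform_insert g (notMem_erase i s)]
  simp only [hg, sub_self]

theorem sum_powerset_moebiusTransform (g : Finset ι → R) (u : Finset ι) :
    ∑ s ∈ u.powerset, moebiusTransform g s = g u := by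
  induction u using Finset.induction_on generalizing g with
  | empty => simp [moebiusTransform]
  | insert i u hi ih =>
    have hinsert : ∀ s ∈ u.powerset, moebiusTransform g (insert i s) =
        moebiusTransform (fun t ↦ g (insert i t)) s - moebiusTransform g s :=
      fun s hs ↦ moebiusTransform_insert g fun h ↦ hi (mem_powerset.1 hs h)
    rw [sum_powerset_insert hi, sum_congr rfl hinsert, sum_sub_distrib, add_sub_cancel, ih]

end MoebiusTransform

section FiberAverage

variable {ι : Type*} [Fintype ι] [DecidableEq ι] {α : ι → Type*} [∀ i, Fintype (α i)]
  {f g h : (∀ i, α i) → ℝ} {J K L : Finset ι}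

/-- The average of `f` over the configurations that agree with `x` on `L`, i.e. the conditional
expectation of `f` given the coordinates in `L` under the uniform distribution. Averaging over all
`y` and overwriting `y` by `x` on `L` avoids sums over fibers that depend on `L` and `x`. -/
noncomputable def fiberAverage (f : (∀ i, α i) → ℝ) (L : Finset ι) (x : ∀ i, α i) : ℝ :=
  𝔼 y, f (L.piecewise x y)

theorem fiberAverage_univ (f : (∀ i, α i) → ℝ) (x : ∀ i, α i) : fiberAverage f univ x = f x := by
  have : Nonempty (∀ i, α i) := ⟨x⟩
  simp only [fiberAverage, piecewise_univ, Fintype.expect_const]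

theorem fiberAverage_eq_of_inter_eq (hf : DependsOn f K) (hKL : K ∩ J = K ∩ L) :
    fiberAverage f J = fiberAverage f L := by
  funext x
  refine expect_congr rfl fun y _ ↦ hf fun i hi ↦ ?_
  have hiff : i ∈ J ↔ i ∈ L := by
    simpa only [mem_inter, mem_coe.1 hi, true_and] using Finset.ext_iff.1 hKL i
  simp only [piecewise, hiff]

theorem dependsOn_fiberAverage (f : (∀ i, α i) → ℝ) (L : Finset ι) :
    DependsOn (fiberAverage f L) L := fun _ _ hxy ↦
  expect_congr rfl fun _ _ ↦ congrArg f (piecewise_congr _ hxy fun _ _ ↦ rfl)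

theorem fiberAverage_mul_left (hg : DependsOn g L) (h : (∀ i, α i) → ℝ) :
    fiberAverage (g * h) L = g * fiberAverage h L := by
  funext x
  have hgx : ∀ y, g (L.piecewise x y) = g x :=
    fun y ↦ hg fun i hi ↦ piecewise_eq_of_mem _ _ _ hi
  simp only [fiberAverage, Pi.mul_apply, hgx, mul_expect]

theorem fiberAverage_mul_right (g : (∀ i, α i) → ℝ) (hh : DependsOn h L) :
    fiberAverage (g * h) L = fiberAverage g L * h := by
  rw [mul_comm, fiberAverage_mul_left hh, mul_comm]

/-- Exchanging `y` and `z` outside `L` preserves the uniform distribution of `(y, z)`. -/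
theorem expect_expect_piecewise [Nonempty (∀ i, α i)] (f : (∀ i, α i) → ℝ) (L : Finset ι) :
    𝔼 y, 𝔼 z, f (L.piecewise y z) = 𝔼 y, f y := by
  have hswap : Function.Involutive fun t : (∀ i, α i) × (∀ i, α i) ↦
      (L.piecewise t.1 t.2, L.piecewise t.2 t.1) := fun t ↦ by
    ext i <;> by_cases hi : i ∈ L <;> simp [hi]
  calc 𝔼 y, 𝔼 z, f (L.piecewise y z)
      = 𝔼 y, 𝔼 _z : ∀ i, α i, f y := by
        rw [← expect_product', ← expect_product']
        exact Fintype.expect_equiv hswap.toPerm _ _ fun _ ↦ rfl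
    _ = 𝔼 y, f y := by simp only [Fintype.expect_const]

theorem fiberAverage_fiberAverage (f : (∀ i, α i) → ℝ) (hLK : L ⊆ K) :
    fiberAverage (fiberAverage f K) L = fiberAverage f L := by
  funext x
  have : Nonempty (∀ i, α i) := ⟨x⟩
  have hassoc : ∀ y z, K.piecewise (L.piecewise x y) z = L.piecewise x (K.piecewise y z) := by
    intro y z
    ext i
    simp only [piecewise]
    grind
  simp only [fiberAverage, hassoc]
  exact expect_expect_piecewise (fun y ↦ f (L.piecewise x y)) K

theorem fiberAverage_mul_inter (hg : DependsOn g K) (hh : DependsOn h L) :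
    fiberAverage (g * h) (K ∩ L) = fiberAverage g (K ∩ L) * fiberAverage h (K ∩ L) := by
  calc fiberAverage (g * h) (K ∩ L)
      = fiberAverage (fiberAverage (g * h) K) (K ∩ L) :=
        (fiberAverage_fiberAverage _ inter_subset_left).symm
    _ = fiberAverage (g * fiberAverage h (K ∩ L)) (K ∩ L) := by
        rw [fiberAverage_mul_left hg, fiberAverage_eq_of_inter_eq hh (L := K ∩ L) (by grind)]
    _ = fiberAverage g (K ∩ L) * fiberAverage h (K ∩ L) :=
        fiberAverage_mul_right g (dependsOn_fiberAverage h _)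

theorem mul_fiberAverage_inter_of_eq_mul (hg : DependsOn g K) (hh : DependsOn h L)
    (hf : f = g * h) : f * fiberAverage f (K ∩ L) = fiberAverage f K * fiberAverage f L := by
  rw [hf, fiberAverage_mul_inter hg hh, fiberAverage_mul_left hg, fiberAverage_mul_right g hh,
    fiberAverage_eq_of_inter_eq hh (J := K) (L := K ∩ L) (by grind),
    fiberAverage_eq_of_inter_eq hg (J := L) (L := K ∩ L) (by grind)]
  ring

end FiberAverage

section Interaction

variable {ι : Type*} [Fintype ι] [DecidableEq ι] {α : ι → Type*} [∀ i, Fintype (α i)]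
  {f : (∀ i, α i) → ℝ} {K L : Finset ι}

/-- The `L`-interaction of `f` (its `L`-component in the functional ANOVA decomposition): the part
of `f` that depends on the coordinates in `L` jointly and averages out over each of them. -/
noncomputable def interaction (f : (∀ i, α i) → ℝ) (L : Finset ι) (x : ∀ i, α i) : ℝ :=
  moebiusTransform (fun K ↦ fiberAverage f K x) L

theorem interaction_add (f g : (∀ i, α i) → ℝ) (L : Finset ι) :
    interaction (f + g) L = interaction f L + interaction g L := by
  funext x
  simp only [interaction, moebiusTransform, fiberAverage, Pi.add_apply, expect_add_distrib, mul_add,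
    sum_add_distrib]

theorem dependsOn_interaction (f : (∀ i, α i) → ℝ) (L : Finset ι) :
    DependsOn (interaction f L) L := fun _ _ hxy ↦
  sum_congr rfl fun K hK ↦ congrArg _ <|
    (dependsOn_fiberAverage f K).mono (mem_powerset.1 hK) hxy

theorem interaction_eq_zero (hf : DependsOn f K) (hLK : ¬L ⊆ K) : interaction f L = 0 := by
  obtain ⟨i, hiL, hiK⟩ := not_subset.1 hLK
  funext x
  exact moebiusTransform_eq_zero hiL fun J ↦
    congrFun (fiberAverage_eq_of_inter_eq hf (inter_insert_of_notMem hiK)) x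

theorem sum_interaction (f : (∀ i, α i) → ℝ) (x : ∀ i, α i) : ∑ L, interaction f L x = f x := by
  rw [← fiberAverage_univ f x, ← powerset_univ]
  exact sum_powerset_moebiusTransform (fun K ↦ fiberAverage f K x) univ

theorem exists_add_eq_of_interaction_eq_zero
    (hf : ∀ J : Finset ι, ¬J ⊆ K → ¬J ⊆ L → interaction f J = 0) :
    ∃ g h : (∀ i, α i) → ℝ, DependsOn g K ∧ DependsOn h L ∧ f = g + h := by
  refine ⟨fun x ↦ ∑ J with J ⊆ K, interaction f J x, fun x ↦ ∑ J with ¬J ⊆ K, interaction f J x,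
    fun x y hxy ↦ sum_congr rfl fun J hJ ↦ ?_, fun x y hxy ↦ sum_congr rfl fun J hJ ↦ ?_, ?_⟩
  · exact (dependsOn_interaction f J).mono (mem_filter.1 hJ).2 hxy
  · by_cases hJL : J ⊆ L
    · exact (dependsOn_interaction f J).mono hJL hxy
    · simp only [hf J (mem_filter.1 hJ).2 hJL, Pi.zero_apply]
  · funext x
    exact ((sum_filter_add_sum_filter_not univ _ _).trans (sum_interaction f x)).symm

end Interaction

section Margin

theorem prod_card_ne_zero {ι : Type*} {α : ι → Type*} [∀ i, Fintype (α i)] (L : Finset ι)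
    (x : ∀ i, α i) : ∏ i ∈ L, (Fintype.card (α i) : ℝ) ≠ 0 :=
  prod_ne_zero_iff.2 fun i _ ↦ Nat.cast_ne_zero.2 (Fintype.card_pos_iff.2 ⟨x i⟩).ne'

variable {ι : Type*} [Fintype ι] [DecidableEq ι] {α : ι → Type*} [∀ i, Fintype (α i)]
  [∀ i, DecidableEq (α i)] {p : (∀ i, α i) → ℝ} {K L : Finset ι}

theorem dependsOn_margin (p : (∀ i, α i) → ℝ) (K : Finset ι) : DependsOn (margin p K) K := by
  intro x y hxy
  refine sum_congr (filter_congr fun z _ ↦ forall₂_congr fun i hi ↦ ?_) fun _ _ ↦ rfl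
  rw [hxy i hi]

theorem dependsOn_log_margin (p : (∀ i, α i) → ℝ) (K : Finset ι) :
    DependsOn (fun x ↦ Real.log (margin p K x)) K :=
  fun _ _ hxy ↦ congrArg Real.log (dependsOn_margin p K hxy)

theorem margin_pos (hp : ∀ x, 0 < p x) (K : Finset ι) (x : ∀ i, α i) : 0 < margin p K x :=
  sum_pos (fun y _ ↦ hp y) ⟨x, by simp⟩

theorem card_filter_forall_mem_eq (L : Finset ι) (x : ∀ i, α i) :
    #{y : ∀ i, α i | ∀ i ∈ L, y i = x i} = ∏ i ∈ Lᶜ, Fintype.card (α i) := by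
  have hpi : ({y : ∀ i, α i | ∀ i ∈ L, y i = x i} : Finset _) =
      Fintype.piFinset fun i ↦ if i ∈ L then {x i} else univ := by
    ext y
    simp only [mem_filter, mem_univ, true_and, Fintype.mem_piFinset]
    refine forall_congr' fun i ↦ ?_
    split_ifs with hi <;> simp [hi]
  simp only [hpi, Fintype.card_piFinset, apply_ite card, card_singleton, card_univ]
  rw [prod_ite, prod_const_one, one_mul, compl_eq_univ_sdiff, filter_notMem_eq_sdiff]

theorem margin_eq_prod_mul_fiberAverage (f : (∀ i, α i) → ℝ) (L : Finset ι) (x : ∀ i, α i) :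
    margin f L x = (∏ i ∈ Lᶜ, (Fintype.card (α i) : ℝ)) * fiberAverage f L x := by
  have : Nonempty (∀ i, α i) := ⟨x⟩
  let g : (∀ i, α i) → ℝ := fun y ↦ if ∀ i ∈ L, y i = x i then f y else 0
  have hg : ∀ y, 𝔼 z, g (L.piecewise y z) =
      if ∀ i ∈ L, y i = x i then fiberAverage f L x else 0 := by
    intro y
    split_ifs with hyx
    · refine expect_congr rfl fun z _ ↦ ?_
      rw [← piecewise_congr L hyx fun i _ ↦ rfl]
      exact if_pos fun i hi ↦ (piecewise_eq_of_mem _ _ _ hi).trans (hyx i hi)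
    · refine expect_eq_zero fun z _ ↦ if_neg fun h ↦ hyx fun i hi ↦ ?_
      rw [← h i hi, piecewise_eq_of_mem _ _ _ hi]
  calc margin f L x = ∑ y, g y := sum_filter _ _
    _ = ∑ y, 𝔼 z, g (L.piecewise y z) := by
        rw [← Fintype.card_mul_expect, ← expect_expect_piecewise g L, Fintype.card_mul_expect]
    _ = ∑ y : ∀ i, α i with ∀ i ∈ L, y i = x i, fiberAverage f L x := by
        rw [sum_filter, sum_congr rfl fun _ _ ↦ hg _]
    _ = (∏ i ∈ Lᶜ, (Fintype.card (α i) : ℝ)) * fiberAverage f L x := by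
        rw [sum_const, card_filter_forall_mem_eq, nsmul_eq_mul, Nat.cast_prod]

theorem nu_eq_fiberAverage (p : (∀ i, α i) → ℝ) (L M : Finset ι) :
    nu p L M = fiberAverage (fun x ↦ Real.log (margin p M x)) L := by
  funext x
  exact inv_mul_eq_iff_eq_mul₀ (prod_card_ne_zero _ x) |>.2 <|
    margin_eq_prod_mul_fiberAverage _ L x

theorem mll_eq_interaction (p : (∀ i, α i) → ℝ) (L M : Finset ι) :
    mll p L M = interaction (fun x ↦ Real.log (margin p M x)) L := by
  funext x
  simp only [mll, nu_eq_fiberAverage, interaction, moebiusTransform]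

theorem mll_eq_zero_of_not_subset (p : (∀ i, α i) → ℝ) (hLK : ¬L ⊆ K) : mll p L K = 0 := by
  rw [mll_eq_interaction]
  exact interaction_eq_zero (dependsOn_log_margin p K) hLK

end Margin

section ConditionalIndependence

variable {ι : Type*} [Fintype ι] [DecidableEq ι] {α : ι → Type*} [∀ i, Fintype (α i)]
  [∀ i, DecidableEq (α i)] {p : (∀ i, α i) → ℝ} {A B C J K L : Finset ι}

/-- `X_{K ∖ L} ⟂ X_{L ∖ K} | X_{K ∩ L}` for overlapping blocks `K` and `L`: the form of conditional
independence in which log-margins and interactions are indexed by the blocks themselves. -/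
def MarginFactorizes (p : (∀ i, α i) → ℝ) (K L : Finset ι) : Prop :=
  ∀ x, margin p (K ∪ L) x * margin p (K ∩ L) x = margin p K x * margin p L x

theorem condIndep_iff_marginFactorizes (hAB : Disjoint A B) :
    CondIndep p A B C ↔ MarginFactorizes p (A ∪ C) (B ∪ C) := by
  rw [CondIndep, MarginFactorizes, ← union_union_distrib_right, ← inter_union_distrib_right,
    disjoint_iff_inter_eq_empty.1 hAB, empty_union]

theorem CondIndep.symm (h : CondIndep p A B C) : CondIndep p B A C := fun x ↦ by
  rw [union_comm B A, h x, mul_comm]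

theorem marginFactorizes_of_eq_mul {g h : (∀ i, α i) → ℝ} (hg : DependsOn g K)
    (hh : DependsOn h L) (hgh : margin p (K ∪ L) = g * h) : MarginFactorizes p K L := by
  intro x
  let c (S : Finset ι) : ℝ := ∏ i ∈ Sᶜ, (Fintype.card (α i) : ℝ)
  have hc : c (K ∪ L) * c (K ∩ L) = c K * c L := by
    simp only [c, compl_union, compl_inter]
    rw [mul_comm, prod_union_inter]
  have hq : fiberAverage p (K ∪ L) = ((c (K ∪ L))⁻¹ • g) * h := by
    funext y
    rw [smul_mul_assoc, ← hgh, Pi.smul_apply, margin_eq_prod_mul_fiberAverage, smul_eq_mul,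
      inv_mul_cancel_left₀ (prod_card_ne_zero _ y)]
  have hcg : DependsOn ((c (K ∪ L))⁻¹ • g) K := fun _ _ hxy ↦ congrArg ((c (K ∪ L))⁻¹ * ·) (hg hxy)
  have havg := congrFun (mul_fiberAverage_inter_of_eq_mul hcg hh hq) x
  rw [fiberAverage_fiberAverage p (inter_subset_left.trans subset_union_left),
    fiberAverage_fiberAverage p subset_union_left,
    fiberAverage_fiberAverage p subset_union_right] at havg
  simp only [margin_eq_prod_mul_fiberAverage]
  rw [mul_mul_mul_comm, mul_mul_mul_comm (∏ i ∈ Kᶜ, _)]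
  exact congrArg₂ _ hc havg

theorem marginFactorizes_of_mll_eq_zero (hp : ∀ x, 0 < p x)
    (hmll : ∀ J ⊆ K ∪ L, ¬J ⊆ K → ¬J ⊆ L → mll p J (K ∪ L) = 0) : MarginFactorizes p K L := by
  have hzero : ∀ J : Finset ι, ¬J ⊆ K → ¬J ⊆ L →
      interaction (fun x ↦ Real.log (margin p (K ∪ L) x)) J = 0 := by
    intro J hJK hJL
    rw [← mll_eq_interaction]
    by_cases hJ : J ⊆ K ∪ L
    · exact hmll J hJ hJK hJL
    · exact mll_eq_zero_of_not_subset p hJ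
  obtain ⟨g, h, hg, hh, hgh⟩ := exists_add_eq_of_interaction_eq_zero hzero
  refine marginFactorizes_of_eq_mul (g := fun x ↦ Real.exp (g x)) (h := fun x ↦ Real.exp (h x))
    (fun _ _ hxy ↦ congrArg Real.exp (hg hxy)) (fun _ _ hxy ↦ congrArg Real.exp (hh hxy)) ?_
  funext x
  rw [← Real.exp_log (margin_pos hp (K ∪ L) x), congrFun hgh x]
  exact Real.exp_add _ _

theorem MarginFactorizes.mll_union (hp : ∀ x, 0 < p x) (hKL : MarginFactorizes p K L)
    (hJ : ¬J ⊆ K) : mll p J (K ∪ L) = mll p J L := by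
  have hlog : (fun x ↦ Real.log (margin p (K ∪ L) x)) + (fun x ↦ Real.log (margin p (K ∩ L) x)) =
      (fun x ↦ Real.log (margin p K x)) + fun x ↦ Real.log (margin p L x) := by
    funext x
    have hne (S : Finset ι) : margin p S x ≠ 0 := (margin_pos hp S x).ne'
    simpa only [Pi.add_apply, Real.log_mul (hne _) (hne _)] using congrArg Real.log (hKL x)
  have hmll := congrArg (interaction · J) hlog
  simp only [interaction_add, ← mll_eq_interaction] at hmll
  rwa [mll_eq_zero_of_not_subset p hJ,
    mll_eq_zero_of_not_subset p fun h ↦ hJ (h.trans inter_subset_left), add_zero, zero_add] at hmll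

theorem MarginFactorizes.strictlyCollapsible (hp : ∀ x, 0 < p x) (hKL : MarginFactorizes p K L)
    (hJ : ¬J ⊆ K) : StrictlyCollapsible p (K ∪ L) L J := by
  refine ⟨fun x ↦ (congrFun (hKL.mll_union hp hJ) x).symm, fun Z _ hJZ hZ x ↦ ?_⟩
  have hZL : ¬Z ⊆ L := by
    obtain ⟨i, hi⟩ := hZ
    grind
  rw [hKL.mll_union hp fun h ↦ hJ (hJZ.subset.trans h), mll_eq_zero_of_not_subset p hZL,
    Pi.zero_apply]

theorem CondIndep.strictlyCollapsible (hp : ∀ x, 0 < p x) (h : CondIndep p A B C)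
    (hAB : Disjoint A B) (hBC : Disjoint B C) (hJ : (J ∩ B).Nonempty) :
    StrictlyCollapsible p (A ∪ B ∪ C) (B ∪ C) J := by
  rw [union_union_distrib_right]
  refine ((condIndep_iff_marginFactorizes hAB).1 h).strictlyCollapsible hp fun hJAC ↦ ?_
  obtain ⟨i, hi⟩ := hJ
  grind [disjoint_left]

theorem marginFactorizes_of_strictlyCollapsible_singleton (hp : ∀ x, 0 < p x)
    (hcoll : ∀ i ∈ L \ K, StrictlyCollapsible p (K ∪ L) L {i}) : MarginFactorizes p K L := by
  refine marginFactorizes_of_mll_eq_zero hp fun J hJ hJK hJL ↦ ?_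
  obtain ⟨i, hiJ, hiK⟩ := not_subset.1 hJK
  obtain ⟨j, hjJ, hjL⟩ := not_subset.1 hJL
  have hiL : i ∈ L := by grind
  funext x
  refine (hcoll i (mem_sdiff.2 ⟨hiL, hiK⟩)).2 J hJ ?_ ⟨j, by grind⟩ x
  exact ssubset_iff_of_subset (singleton_subset_iff.2 hiJ) |>.2 ⟨j, hjJ, by grind⟩

end ConditionalIndependence

theorem stmt11_general {ι : Type*} [Fintype ι] [DecidableEq ι] {α : ι → Type*} [∀ i, Fintype (α i)]
    [∀ i, DecidableEq (α i)] (p : (∀ i, α i) → ℝ) (hp : ∀ x, 0 < p x) {A B C : Finset ι}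
    (hAB : Disjoint A B) (hAC : Disjoint A C) (hBC : Disjoint B C) :
    List.TFAE [CondIndep p A B C,
      ∀ b ∈ B, StrictlyCollapsible p (A ∪ B ∪ C) (B ∪ C) {b},
      ((∀ B' ⊆ B, B'.Nonempty → StrictlyCollapsible p (A ∪ B ∪ C) (B ∪ C) B') ∧
        (∀ B' ⊆ B, B'.Nonempty → ∀ C' ⊆ C, C'.Nonempty →
          StrictlyCollapsible p (A ∪ B ∪ C) (B ∪ C) (B' ∪ C'))) ∧
      ((∀ A' ⊆ A, A'.Nonempty → StrictlyCollapsible p (A ∪ B ∪ C) (A ∪ C) A') ∧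
        (∀ A' ⊆ A, A'.Nonempty → ∀ C' ⊆ C, C'.Nonempty →
          StrictlyCollapsible p (A ∪ B ∪ C) (A ∪ C) (A' ∪ C')))] := by
  tfae_have 1 → 3 := by
    intro h
    refine ⟨⟨fun B' hB' hne ↦ ?_, fun B' hB' hne C' _ _ ↦ ?_⟩,
      fun A' hA' hne ↦ ?_, fun A' hA' hne C' _ _ ↦ ?_⟩
    · exact h.strictlyCollapsible hp hAB hBC (hne.mono (subset_inter subset_rfl hB'))
    · exact h.strictlyCollapsible hp hAB hBC (hne.mono (subset_inter subset_union_left hB'))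
    · rw [union_comm A B]
      exact h.symm.strictlyCollapsible hp hAB.symm hAC (hne.mono (subset_inter subset_rfl hA'))
    · rw [union_comm A B]
      exact h.symm.strictlyCollapsible hp hAB.symm hAC
        (hne.mono (subset_inter subset_union_left hA'))
  tfae_have 3 → 2 := fun h b hb ↦ h.1.1 {b} (singleton_subset_iff.2 hb) (singleton_nonempty b)
  tfae_have 2 → 1 := by
    intro h
    rw [union_union_distrib_right] at h
    exact (condIndep_iff_marginFactorizes hAB).2 <|
      marginFactorizes_of_strictlyCollapsible_singleton hp fun i hi ↦ h i (by grind)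
  tfae_finish

theorem stmt11 (p : (∀ v, 𝔛 v) → ℝ) (hp : ∀ x, 0 < p x) (hsum : ∑ x, p x = 1)
    (A B C M : Finset V) (hA : A.Nonempty) (hB : B.Nonempty) (hC : C.Nonempty)
    (hAB : Disjoint A B) (hAC : Disjoint A C) (hBC : Disjoint B C)
    (hM : M = A ∪ B ∪ C) :
    (((∀ B' ⊆ B, B'.Nonempty → StrictlyCollapsible p M (B ∪ C) B') ∧
      (∀ B' ⊆ B, B'.Nonempty → ∀ C' ⊆ C, C'.Nonempty →
        StrictlyCollapsible p M (B ∪ C) (B' ∪ C'))) ∧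
     ((∀ A' ⊆ A, A'.Nonempty → StrictlyCollapsible p M (A ∪ C) A') ∧
      (∀ A' ⊆ A, A'.Nonempty → ∀ C' ⊆ C, C'.Nonempty →
        StrictlyCollapsible p M (A ∪ C) (A' ∪ C')))) ↔
    CondIndep p A B C := by
  subst hM
  exact (stmt11_general p hp hAB hAC hBC).out 2 0
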